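/- Let n ≥ 3 and define K(x', s) = ∫_{ℝ^{n-1}} e^{-|x' - z'|^2/(4s)} / |z'|^{n-2} dz' for x' ∈ ℝ^{n-1} \ {0} and s > 0. Then for every m ≥ 2, K(x', s) ≥ (m/((m+1)|x'|))^{n-2} s^{(n-1)/2} (4π)^{(n-1)/2} (1 - 2^{(n-1)/4} e^{-|x'|^2/(8 m^2 s)}). -/

import Mathlib

open Real MeasureTheory

theorem sq_norm_sub_mul_eq {V : Type*} [NormedAddCommGroup V] [InnerProductSpace ℝ V]
    (x v : V) (c : ℝ) :
    ‖x - v‖ ^ 2 * c = ‖x‖ ^ 2 * c + ‖v‖ ^ 2 * c + -2 * (inner ℝ x v * c) := by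
  rw [norm_sub_sq_real]; ring

section Gaussian

variable {V : Type*} [NormedAddCommGroup V] [InnerProductSpace ℝ V] [FiniteDimensional ℝ V]
  [MeasurableSpace V] [BorelSpace V]

theorem integrable_rexp_neg_mul_sq_norm {b : ℝ} (hb : 0 < b) :
    Integrable (fun v : V ↦ rexp (-b * ‖v‖ ^ 2)) := by
  by_contra h
  have h1 := GaussianFourier.integral_rexp_neg_mul_sq_norm (V := V) hb
  rw [integral_undef h] at h1
  have h2 : 0 < (π / b) ^ (Module.finrank ℝ V / 2 : ℝ) := by positivity
  exact h2.ne h1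

theorem integrable_sq_norm_mul_rexp_neg_mul_sq_norm {b : ℝ} (hb : 0 < b) :
    Integrable (fun v : V ↦ ‖v‖ ^ 2 * rexp (-b * ‖v‖ ^ 2)) := by
  refine ((integrable_rexp_neg_mul_sq_norm (V := V) (half_pos hb)).const_mul (2 / b)).mono'
    (by fun_prop) (ae_of_all _ fun v ↦ ?_)
  rw [norm_of_nonneg (by positivity)]
  have h1 : b / 2 * ‖v‖ ^ 2 ≤ rexp (b / 2 * ‖v‖ ^ 2) := by
    linarith [add_one_le_exp (b / 2 * ‖v‖ ^ 2)]
  have h2 : rexp (-(b / 2) * ‖v‖ ^ 2) = rexp (b / 2 * ‖v‖ ^ 2) * rexp (-b * ‖v‖ ^ 2) := by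
    rw [← exp_add]; congr 1; ring
  rw [h2, ← mul_assoc]
  gcongr
  calc ‖v‖ ^ 2 = 2 / b * (b / 2 * ‖v‖ ^ 2) := by field_simp
    _ ≤ _ := by gcongr

theorem integrable_inner_mul_rexp_neg_mul_sq_norm {b : ℝ} (hb : 0 < b) (x : V) :
    Integrable (fun v : V ↦ inner ℝ x v * rexp (-b * ‖v‖ ^ 2)) := by
  refine (((integrable_rexp_neg_mul_sq_norm (V := V) hb).const_mul (‖x‖ ^ 2)).add
    (integrable_sq_norm_mul_rexp_neg_mul_sq_norm hb)).mono'
    (by fun_prop) (ae_of_all _ fun v ↦ ?_)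
  rw [norm_mul, norm_of_nonneg (exp_pos _).le, Pi.add_apply, ← add_mul]
  gcongr
  have := norm_inner_le_norm (𝕜 := ℝ) x v
  nlinarith [sq_nonneg (‖x‖ - ‖v‖), sq_nonneg (‖x‖ + ‖v‖)]

theorem integral_inner_mul_rexp_neg_mul_sq_norm (b : ℝ) (x : V) :
    ∫ v : V, inner ℝ x v * rexp (-b * ‖v‖ ^ 2) = 0 := by
  have h := integral_neg_eq_self (fun v : V ↦ inner ℝ x v * rexp (-b * ‖v‖ ^ 2)) volume
  simp only [inner_neg_right, norm_neg, neg_mul, integral_neg] at h ⊢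
  linarith

theorem integral_sq_norm_mul_rexp_neg_mul_sq_norm_le {b : ℝ} (hb : 0 < b) :
    ∫ v : V, ‖v‖ ^ 2 * rexp (-b * ‖v‖ ^ 2) ≤
      Module.finrank ℝ V * log 2 / b * ∫ v : V, rexp (-b * ‖v‖ ^ 2) := by
  set d : ℝ := ((Module.finrank ℝ V : ℕ) : ℝ)
  have hg := integrable_rexp_neg_mul_sq_norm (V := V) hb
  have hm := integrable_sq_norm_mul_rexp_neg_mul_sq_norm (V := V) hb
  have hexp : rexp (d / 2 * log 2) = 2 ^ (d / 2) := by
    rw [rpow_def_of_pos two_pos, mul_comm]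
  have hhalf : ∫ v : V, rexp (-(b / 2) * ‖v‖ ^ 2) =
      2 ^ (d / 2) * ∫ v : V, rexp (-b * ‖v‖ ^ 2) := by
    rw [GaussianFourier.integral_rexp_neg_mul_sq_norm (half_pos hb),
      GaussianFourier.integral_rexp_neg_mul_sq_norm hb,
      ← mul_rpow two_pos.le (by positivity)]
    congr 1
    field_simp
  have hle : ∫ v : V, ((1 - d / 2 * log 2) * rexp (-b * ‖v‖ ^ 2) +
      b / 2 * (‖v‖ ^ 2 * rexp (-b * ‖v‖ ^ 2))) ≤
      ∫ v : V, (2 ^ (d / 2))⁻¹ * rexp (-(b / 2) * ‖v‖ ^ 2) := by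
    refine integral_mono ((hg.const_mul _).add (hm.const_mul _))
      ((integrable_rexp_neg_mul_sq_norm (half_pos hb)).const_mul _) fun v ↦ ?_
    have h1 : (2 ^ (d / 2))⁻¹ * rexp (-(b / 2) * ‖v‖ ^ 2) =
        rexp (b / 2 * ‖v‖ ^ 2 - d / 2 * log 2) * rexp (-b * ‖v‖ ^ 2) := by
      rw [← hexp, ← exp_neg, ← exp_add, ← exp_add]; congr 1; ring
    simp only [h1, ← mul_assoc, ← add_mul]
    gcongr
    linarith [add_one_le_exp (b / 2 * ‖v‖ ^ 2 - d / 2 * log 2)]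
  rw [integral_add (hg.const_mul _) (hm.const_mul _), integral_const_mul, integral_const_mul,
    integral_const_mul, hhalf, inv_mul_cancel_left₀ (by positivity)] at hle
  rw [div_mul_eq_mul_div, le_div_iff₀ hb]
  linarith

theorem integrable_sq_norm_sub_mul_rexp_neg_mul_sq_norm {b : ℝ} (hb : 0 < b) (x : V) :
    Integrable (fun v : V ↦ ‖x - v‖ ^ 2 * rexp (-b * ‖v‖ ^ 2)) := by
  simp only [sq_norm_sub_mul_eq]
  exact (((integrable_rexp_neg_mul_sq_norm hb).const_mul _).add
    (integrable_sq_norm_mul_rexp_neg_mul_sq_norm hb)).add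
    ((integrable_inner_mul_rexp_neg_mul_sq_norm hb x).const_mul _)

theorem integral_sq_norm_sub_mul_rexp_neg_mul_sq_norm {b : ℝ} (hb : 0 < b) (x : V) :
    ∫ v : V, ‖x - v‖ ^ 2 * rexp (-b * ‖v‖ ^ 2) =
      ‖x‖ ^ 2 * (∫ v : V, rexp (-b * ‖v‖ ^ 2)) + ∫ v : V, ‖v‖ ^ 2 * rexp (-b * ‖v‖ ^ 2) := by
  have h1 := (integrable_rexp_neg_mul_sq_norm (V := V) hb).const_mul (‖x‖ ^ 2)
  have h2 := integrable_sq_norm_mul_rexp_neg_mul_sq_norm (V := V) hb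
  have h3 := (integrable_inner_mul_rexp_neg_mul_sq_norm hb x).const_mul (-2)
  simp only [sq_norm_sub_mul_eq]
  have h12 : Integrable (fun v : V ↦
      ‖x‖ ^ 2 * rexp (-b * ‖v‖ ^ 2) + ‖v‖ ^ 2 * rexp (-b * ‖v‖ ^ 2)) := h1.add h2
  rw [integral_add h12 h3, integral_add h1 h2, integral_const_mul, integral_const_mul,
    integral_inner_mul_rexp_neg_mul_sq_norm, mul_zero, add_zero]

theorem integrable_rexp_neg_mul_sq_norm_div_norm_sub_pow {b : ℝ} (hb : 0 < b) {k : ℕ}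
    (hk : k < Module.finrank ℝ V) (x : V) :
    Integrable (fun v : V ↦ rexp (-b * ‖v‖ ^ 2) / ‖x - v‖ ^ k) := by
  have hg := integrable_rexp_neg_mul_sq_norm (V := V) hb
  have hmeas : Measurable (fun z : V ↦ rexp (-b * ‖x - z‖ ^ 2) / ‖z‖ ^ k) := by fun_prop
  have hz : Integrable (fun z : V ↦ rexp (-b * ‖x - z‖ ^ 2) / ‖z‖ ^ k) := by
    rw [← integrableOn_univ, ← Set.union_compl_self (Metric.ball (0 : V) 1)]
    refine IntegrableOn.union ?_ ?_
    · refine integrableOn_ball_of_norm_le_rpow (C := 1) (α := k) (by lia) (by exact_mod_cast hk)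
        (ae_of_all _ fun z ↦ ?_) hmeas.aestronglyMeasurable
      rw [norm_of_nonneg (by positivity), rpow_neg (norm_nonneg _), rpow_natCast, div_eq_mul_inv]
      gcongr
      rw [exp_le_one_iff]
      nlinarith [sq_nonneg ‖x - z‖]
    · have hgz : Integrable (fun z : V ↦ rexp (-b * ‖x - z‖ ^ 2)) := hg.comp_sub_left x
      refine hgz.integrableOn.mono' hmeas.aestronglyMeasurable.restrict ?_
      filter_upwards [ae_restrict_mem Metric.isOpen_ball.measurableSet.compl] with z hz
      rw [norm_of_nonneg (by positivity)]
      refine div_le_self (exp_pos _).le (one_le_pow₀ ?_)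
      simpa using hz
  simpa using hz.comp_sub_left x

end Gaussian

theorem one_sub_mul_sq_sub_one_le_inv_pow {y : ℝ} (hy : 0 < y) (k : ℕ) :
    1 - k / 2 * (y ^ 2 - 1) ≤ y⁻¹ ^ k := by
  have h1 := one_add_mul_le_pow (a := y⁻¹ - 1) (by linarith [inv_pos.2 hy]) k
  have h2 : (1 - y ^ 2) / 2 ≤ y⁻¹ - 1 := by
    rw [inv_eq_one_div, le_sub_iff_add_le, le_div_iff₀ hy]
    nlinarith [mul_nonneg (sq_nonneg (y - 1)) (by linarith : (0 : ℝ) ≤ y + 2)]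
  have h3 := mul_le_mul_of_nonneg_left h2 (Nat.cast_nonneg (α := ℝ) k)
  rw [add_sub_cancel] at h1
  linarith

theorem inv_pow_mul_integral_le_integral_rexp_div_norm_sub_pow
    {V : Type*} [NormedAddCommGroup V] [InnerProductSpace ℝ V] [FiniteDimensional ℝ V]
    [MeasurableSpace V] [BorelSpace V] {b R : ℝ} (hb : 0 < b) (hR : 0 < R) {k : ℕ}
    (hk : k < Module.finrank ℝ V) (x : V)
    (hxR : ‖x‖ ^ 2 + Module.finrank ℝ V * log 2 / b ≤ R ^ 2) :
    R⁻¹ ^ k * ∫ v : V, rexp (-b * ‖v‖ ^ 2) ≤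
      ∫ v : V, rexp (-b * ‖v‖ ^ 2) / ‖x - v‖ ^ k := by
  have : Nontrivial V := Module.nontrivial_of_finrank_pos (R := ℝ) (by lia)
  set G := ∫ v : V, rexp (-b * ‖v‖ ^ 2)
  have hG0 : 0 ≤ G := integral_nonneg fun v ↦ (exp_pos _).le
  have hg := integrable_rexp_neg_mul_sq_norm (V := V) hb
  have hq := integrable_sq_norm_sub_mul_rexp_neg_mul_sq_norm hb x
  have hmoment : ∫ v : V, ‖x - v‖ ^ 2 * rexp (-b * ‖v‖ ^ 2) ≤ R ^ 2 * G := by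
    rw [integral_sq_norm_sub_mul_rexp_neg_mul_sq_norm hb]
    have := integral_sq_norm_mul_rexp_neg_mul_sq_norm_le (V := V) hb
    nlinarith [mul_le_mul_of_nonneg_right hxR hG0]
  calc R⁻¹ ^ k * G ≤ R⁻¹ ^ k * ((1 + k / 2) * G + -(k / 2 / R ^ 2) *
        ∫ v : V, ‖x - v‖ ^ 2 * rexp (-b * ‖v‖ ^ 2)) := by
        gcongr
        have h1 := mul_le_mul_of_nonneg_left hmoment (by positivity : 0 ≤ (k : ℝ) / 2 / R ^ 2)
        have h2 : (k : ℝ) / 2 / R ^ 2 * (R ^ 2 * G) = k / 2 * G := by field_simp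
        linarith
    _ = ∫ v : V, R⁻¹ ^ k * ((1 + k / 2) * rexp (-b * ‖v‖ ^ 2) + -(k / 2 / R ^ 2) *
        (‖x - v‖ ^ 2 * rexp (-b * ‖v‖ ^ 2))) := by
        rw [integral_const_mul, integral_add (hg.const_mul _) (hq.const_mul _),
          integral_const_mul, integral_const_mul]
    _ ≤ _ := by
        refine integral_mono_ae (((hg.const_mul _).add (hq.const_mul _)).const_mul _)
          (integrable_rexp_neg_mul_sq_norm_div_norm_sub_pow hb hk x) ?_
        filter_upwards [Measure.ae_ne volume x] with v hv
        have hy : 0 < ‖x - v‖ := norm_pos_iff.2 (sub_ne_zero.2 hv.symm)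
        have h := one_sub_mul_sq_sub_one_le_inv_pow (div_pos hy hR) k
        calc _ = R⁻¹ ^ k * (1 - k / 2 * ((‖x - v‖ / R) ^ 2 - 1)) * rexp (-b * ‖v‖ ^ 2) := by
              field_simp
              ring
          _ ≤ R⁻¹ ^ k * (‖x - v‖ / R)⁻¹ ^ k * rexp (-b * ‖v‖ ^ 2) := by gcongr
          _ = _ := by
              rw [← mul_pow, show R⁻¹ * (‖x - v‖ / R)⁻¹ = ‖x - v‖⁻¹ by field_simp, inv_pow]
              field_simp

theorem stmt19 (n : ℕ) (hn : 3 ≤ n)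
    (K : EuclideanSpace ℝ (Fin (n - 1)) → ℝ → ℝ)
    (hK : ∀ x' s, K x' s =
      ∫ z' : EuclideanSpace ℝ (Fin (n - 1)),
        Real.exp (-‖x' - z'‖ ^ 2 / (4 * s)) / ‖z'‖ ^ (n - 2))
    (m : ℝ) (hm : 2 ≤ m)
    (x' : EuclideanSpace ℝ (Fin (n - 1))) (s : ℝ) (hx : x' ≠ 0) (hs : 0 < s) :
    K x' s ≥ (m / ((m + 1) * ‖x'‖)) ^ (n - 2) * s ^ (((n : ℝ) - 1) / 2) *
        (4 * Real.pi) ^ (((n : ℝ) - 1) / 2) *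
        (1 - 2 ^ (((n : ℝ) - 1) / 4) * Real.exp (-‖x'‖ ^ 2 / (8 * m ^ 2 * s))) := by
  have hm0 : 0 < m := by linarith
  have hx0 : 0 < ‖x'‖ := norm_pos_iff.2 hx
  have hn1 : ((n - 1 : ℕ) : ℝ) = (n : ℝ) - 1 := by
    rw [Nat.cast_sub (by lia), Nat.cast_one]
  set C := (m / ((m + 1) * ‖x'‖)) ^ (n - 2) * s ^ (((n : ℝ) - 1) / 2) *
        (4 * Real.pi) ^ (((n : ℝ) - 1) / 2) with hC
  have hC0 : 0 ≤ C := by positivity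
  set q := (2 : ℝ) ^ (((n : ℝ) - 1) / 4) * Real.exp (-‖x'‖ ^ 2 / (8 * m ^ 2 * s)) with hq
  have hq0 : 0 ≤ q := by positivity
  rcases le_or_gt 1 q with h1 | h1
  · have : 0 ≤ K x' s := by
      rw [hK]
      exact integral_nonneg fun z ↦ by positivity
    nlinarith
  have hlog : ((n : ℝ) - 1) * log 2 * (4 * s) ≤ 2 / m ^ 2 * ‖x'‖ ^ 2 := by
    rw [hq, rpow_def_of_pos two_pos, ← exp_add, exp_lt_one_iff] at h1
    have h2 : log 2 * (((n : ℝ) - 1) / 4) < ‖x'‖ ^ 2 / (8 * m ^ 2 * s) := by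
      rw [neg_div] at h1; linarith
    calc ((n : ℝ) - 1) * log 2 * (4 * s) = 16 * s * (log 2 * (((n : ℝ) - 1) / 4)) := by ring
      _ ≤ 16 * s * (‖x'‖ ^ 2 / (8 * m ^ 2 * s)) := by gcongr
      _ = _ := by field_simp; norm_num
  have hR : 0 < (m + 1) * ‖x'‖ / m := by positivity
  have hb : 0 < 1 / (4 * s) := by positivity
  have key := inv_pow_mul_integral_le_integral_rexp_div_norm_sub_pow hb hR (k := n - 2)
    (by simp; lia) x' (by
      rw [finrank_euclideanSpace_fin, hn1, div_div_eq_mul_div, div_one]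
      refine (add_le_add_right hlog _).trans ?_
      rw [show ((m + 1) * ‖x'‖ / m) ^ 2 =
        ‖x'‖ ^ 2 + (2 * m + 1) / m ^ 2 * ‖x'‖ ^ 2 by field_simp; ring]
      gcongr
      linarith)
  have hKv : K x' s = ∫ v, rexp (-(1 / (4 * s)) * ‖v‖ ^ 2) / ‖x' - v‖ ^ (n - 2) := by
    rw [hK, ← integral_sub_left_eq_self _ volume x']
    congr with v
    rw [sub_sub_cancel]
    congr 2
    ring
  rw [GaussianFourier.integral_rexp_neg_mul_sq_norm hb, finrank_euclideanSpace_fin, hn1, inv_div,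
    show π / (1 / (4 * s)) = s * (4 * π) by field_simp,
    mul_rpow hs.le (by positivity), ← mul_assoc, ← hC, ← hKv] at key
  nlinarith
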